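/- Let S and T be solid strings of length n over an alphabet Σ, let $ ∉ Σ, let S′ = S · $^n, let k ≥ 0, and fix 1 ≤ i ≤ n. Suppose j (1 ≤ j ≤ n) is the position of the (k+1)-th mismatch between T and S′[i..i+n−1], i.e., j is the least index such that T[j] ≠ S′[i+j−1] and |{t : 1 ≤ t ≤ j, T[t] ≠ S′[i+t−1]}| = k + 1. Then: if j > n − i + 1, the Hamming distance on the overlap satisfies H(T[1..n−i+1], S[i..n]) = n + k + 2 − j − i; and if j ≤ n − i + 1, then H(T[1..n−i+1], S[i..n]) ≥ k + 1. -/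

import Mathlib

/-- 1-based inclusive factor `S[i..j]`. -/
def factor {β : Type*} (S : List β) (i j : ℕ) : List β := (S.drop (i - 1)).take (j - i + 1)

/-- Hamming distance of two (equal-length) solid strings: number of mismatched positions. -/
def hammS {α : Type*} [DecidableEq α] (s t : List α) : ℕ :=
  (List.zipWith (fun a b => if a = b then 0 else 1) s t).sum

/-!
Up to position `n - i + 1` the mismatches between `T` and `S′[i..i+n-1]` are those counted by the
Hamming distance of the overlap; beyond it `S′` reads `$`, which does not occur in `T`, so every
position is a mismatch. Hence for `j > n - i + 1` the first `j` positions contain exactly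
`j - (n - i + 1)` mismatches more than the overlap, and for `j ≤ n - i + 1` at most as many.
-/

section Factor

variable {β : Type*} {S : List β} {i j : ℕ}

theorem length_factor (hi : 1 ≤ i) (hij : i ≤ j) (hj : j ≤ S.length) :
    (factor S i j).length = j - i + 1 := by
  rw [factor, List.length_take, List.length_drop]
  omega

theorem getD_factor (d : β) {x : ℕ} (hx : x < j - i + 1) :
    (factor S i j).getD x d = S.getD (i - 1 + x) d := by
  simp only [factor, List.getD_eq_getElem?_getD, List.getElem?_take_of_lt hx, List.getElem?_drop]

end Factor

theorem getD_append_replicate_self {β : Type*} (S : List β) (m x : ℕ) (d : β) :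
    (S ++ List.replicate m d).getD x d = S.getD x d := by
  rcases lt_or_ge x S.length with hx | hx
  · exact List.getD_append S _ d x hx
  · rw [List.getD_append_right S _ d x hx, List.getD_eq_default S d hx,
      List.getD_eq_getElem?_getD, List.getElem?_getD_replicate_default_eq]

theorem getD_ne_getD_of_length_le {β : Type*} {d : β} {S T : List β} (hd : d ∉ T) {x y : ℕ}
    (hx : x < T.length) (hy : S.length ≤ y) : T.getD x d ≠ S.getD y d := by
  rw [List.getD_eq_getElem T d hx, List.getD_eq_default S d hy]
  exact ne_of_mem_of_not_mem (List.getElem_mem hx) hd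

section Mismatches

variable {α : Type*} [DecidableEq α]

/-- The 1-based positions `t ≤ j` at which `T` differs from the suffix `S[i..]`. Both strings are
continued indefinitely by the symbol `d`, so that appending copies of `d` to `S` changes nothing. -/
def mismatches (d : α) (T S : List α) (i j : ℕ) : Finset ℕ :=
  (Finset.Icc 1 j).filter fun t => T.getD (t - 1) d ≠ S.getD (i + t - 2) d

theorem mismatches_append_replicate (d : α) (T S : List α) (m i j : ℕ) :
    mismatches d T (S ++ List.replicate m d) i j = mismatches d T S i j := by
  simp only [mismatches, getD_append_replicate_self]

theorem mismatches_mono (d : α) (T S : List α) (i : ℕ) : Monotone (mismatches d T S i) :=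
  fun _ _ hj => Finset.filter_subset_filter _ (Finset.Icc_subset_Icc_right hj)

theorem hammS_eq_card_range (d : α) {s t : List α} (hst : s.length = t.length) :
    hammS s t = ((Finset.range s.length).filter fun x => s.getD x d ≠ t.getD x d).card := by
  rw [Finset.card_filter]
  induction s generalizing t with
  | nil => rfl
  | cons a s ih =>
    obtain _ | ⟨b, t⟩ := t
    · contradiction
    have hcons : hammS (a :: s) (b :: t) = hammS s t + if a ≠ b then 1 else 0 := by
      simp only [hammS, List.zipWith_cons_cons, List.sum_cons, ite_not, add_comm]
    rw [hcons, ih (Nat.succ.inj hst), List.length_cons, Finset.sum_range_succ']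
    rfl

theorem card_mismatches_eq_card_range (d : α) (T S : List α) {i : ℕ} (hi : 1 ≤ i) (j : ℕ) :
    (mismatches d T S i j).card =
      ((Finset.range j).filter fun x => T.getD x d ≠ S.getD (i - 1 + x) d).card := by
  have hshift (x : ℕ) : i + (x + 1) - 2 = i - 1 + x := by omega
  rw [mismatches, Finset.card_filter, Finset.card_filter, Finset.range_eq_Ico,
    ← Finset.Ico_add_one_right_eq_Icc, ← Finset.sum_Ico_add' _ 0 j 1]
  simp only [hshift, Nat.add_sub_cancel]

theorem hammS_factor_eq_card_mismatches (d : α) {S T : List α} {i : ℕ} (hi : 1 ≤ i)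
    (hiS : i ≤ S.length) (hT : S.length - i + 1 ≤ T.length) :
    hammS (factor T 1 (S.length - i + 1)) (factor S i S.length) =
      (mismatches d T S i (S.length - i + 1)).card := by
  have hlenT : (factor T 1 (S.length - i + 1)).length = S.length - i + 1 :=
    length_factor le_rfl (Nat.le_add_left 1 _) hT
  have hlenS : (factor S i S.length).length = S.length - i + 1 := length_factor hi hiS le_rfl
  rw [hammS_eq_card_range d (hlenT.trans hlenS.symm), hlenT, card_mismatches_eq_card_range d T S hi]
  congr 1
  refine Finset.filter_congr fun x hx => ?_
  have hx : x < S.length - i + 1 := Finset.mem_range.mp hx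
  rw [getD_factor d (by omega), getD_factor d hx, Nat.sub_self, Nat.zero_add]

theorem card_mismatches_eq_add {d : α} {S T : List α} (hd : d ∉ T) {i j : ℕ}
    (hj : S.length - i + 1 ≤ j) (hjT : j ≤ T.length) :
    (mismatches d T S i j).card =
      (mismatches d T S i (S.length - i + 1)).card + (j - (S.length - i + 1)) := by
  induction j, hj using Nat.le_induction with
  | base => rw [Nat.sub_self]; rfl
  | succ j hj ih =>
    have hne : T.getD (j + 1 - 1) d ≠ S.getD (i + (j + 1) - 2) d :=
      getD_ne_getD_of_length_le hd (by omega) (by omega)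
    have hinsert : mismatches d T S i (j + 1) = insert (j + 1) (mismatches d T S i j) := by
      rw [mismatches, ← Finset.insert_Icc_right_eq_Icc_add_one (Nat.le_add_left 1 j),
        Finset.filter_insert, if_pos hne, mismatches]
    have hnotMem : j + 1 ∉ mismatches d T S i j := by
      simp [mismatches]
    rw [hinsert, Finset.card_insert_of_notMem hnotMem, ih (by omega)]
    omega

end Mismatches

theorem stmt13_general {α : Type*} [DecidableEq α] (S T : List α) (k : ℕ) (d : α) (hdT : d ∉ T)
    (i j : ℕ) (hi1 : 1 ≤ i) (hiS : i ≤ S.length) (hT : S.length - i + 1 ≤ T.length)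
    (hjT : j ≤ T.length)
    (hcnt : ((Finset.Icc 1 j).filter (fun t =>
        T.getD (t - 1) d ≠ (S ++ List.replicate T.length d).getD (i + t - 2) d)).card = k + 1) :
    (S.length - i + 1 < j →
        hammS (factor T 1 (S.length - i + 1)) (factor S i S.length) =
          S.length + k + 2 - j - i) ∧
    (j ≤ S.length - i + 1 →
        k + 1 ≤ hammS (factor T 1 (S.length - i + 1)) (factor S i S.length)) := by
  change (mismatches d T (S ++ List.replicate T.length d) i j).card = k + 1 at hcnt
  rw [mismatches_append_replicate] at hcnt
  rw [hammS_factor_eq_card_mismatches d hi1 hiS hT]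
  constructor
  · intro hj
    have hadd := card_mismatches_eq_add hdT hj.le hjT
    omega
  · intro hj
    rw [← hcnt]
    exact Finset.card_le_card (mismatches_mono d T S i hj)

/-- let `S′ = S · $^n` (the sentinel `$` is the symbol `d`, occurring in
neither `S` nor `T`), and let `j` be the position of the `(k+1)`-th mismatch between `T` and
`S′[i..i+n−1]` (i.e. position `j` is a mismatch and there are exactly `k+1` mismatches among
positions `1..j`).  Then: if `j > n − i + 1`, the Hamming distance on the overlap is
`H(T[1..n−i+1], S[i..n]) = n + k + 2 − j − i`; and if `j ≤ n − i + 1`, it is at least `k+1`.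
Characters are accessed 1-based via `getD` (all accesses are in bounds). -/
theorem stmt13 {α : Type*} [DecidableEq α] (S T : List α) (n k : ℕ) (d : α)
    (hS : S.length = n) (hT : T.length = n) (hdS : d ∉ S) (hdT : d ∉ T)
    (i j : ℕ) (hi1 : 1 ≤ i) (hin : i ≤ n) (hj1 : 1 ≤ j) (hjn : j ≤ n)
    (hmis : T.getD (j - 1) d ≠ (S ++ List.replicate n d).getD (i + j - 2) d)
    (hcnt : ((Finset.Icc 1 j).filter
        (fun t => T.getD (t - 1) d ≠ (S ++ List.replicate n d).getD (i + t - 2) d)).card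
        = k + 1) :
    (n - i + 1 < j →
        hammS (factor T 1 (n - i + 1)) (factor S i n) = n + k + 2 - j - i) ∧
    (j ≤ n - i + 1 →
        k + 1 ≤ hammS (factor T 1 (n - i + 1)) (factor S i n)) := by
  subst hS
  exact stmt13_general S T k d hdT i j hi1 hin (by omega) (hT ▸ hjn) (hT.symm ▸ hcnt)
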